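/- For every α ∈ (0,1) and β ≥ 0, the function t ↦ φ(-α, β, -e^t) is log-concave on ℝ if and only if β ≥ α, or β = 0 and α ≤ 1/2. (Equivalently, the random variable M_{α,β} with density Γ(α+β)·φ(-α,β,-x) is multiplicatively strongly unimodal exactly under these conditions.) -/

import Mathlib

/-- The Wright function `φ(ρ, β, x) = ∑ x^n / (n! Γ(β + ρ n))`. -/
noncomputable def wright (ρ β x : ℝ) : ℝ :=
  ∑' n : ℕ, x ^ n / ((n.factorial : ℝ) * Real.Gamma (β + ρ * n))

/-- `f` is log-concave on the set `S`. -/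
def LogConcaveOn' (f : ℝ → ℝ) (S : Set ℝ) : Prop :=
  ∀ x ∈ S, ∀ y ∈ S, ∀ t ∈ Set.Icc (0 : ℝ) 1,
    f ((1 - t) * x + t * y) ≥ f x ^ (1 - t) * f y ^ t

/-!
Put `F x = φ(-α, β, -x)`. The coefficient of `z ^ N` in `(1 - z) ^ (-β) * (1 - (1 - z) ^ α) ^ n`,
multiplied by `N ^ (1 - β)`, tends to `F x` when `n ~ x * N ^ α`. These coefficients satisfy a
triangular recurrence in `N` which preserves log-concavity in `n` (for `α ≤ β`), so `F` is
log-concave on the half-line; as `F'(0) = -1 / Γ(β - α) ≤ 0`, both `F' / F` and `x * F' x / F x`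
decrease, and the latter says that `t ↦ F (exp t)` is log-concave. Conversely, log-concavity of
`t ↦ F (exp t)` gives `F (x / 2) * F (2 * x) ≤ F x ^ 2`, which to first order at `x = 0` forces
`F'(0) ≤ 0` and hence `α ≤ β` when `0 < β`. The case `β = 0` reduces to `β = 1 - α` because
`φ(-α, 0, -x) = α * x * φ(-α, 1 - α, -x)`.
-/

section

open Finset Filter Topology
open scoped NNReal Nat Real

/-- Strong log-concavity, in the form of the Turán-type inequality
`f x * f (x + d + k) ≤ f (x + d) * f (x + k)`. It is used for sequences (`M = ℕ`) and for functions
on the half-line (`M = ℝ≥0`). -/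
def StrongLogConcave {M : Type*} [Add M] (f : M → ℝ) : Prop :=
  ∀ x d k, f x * f (x + d + k) ≤ f (x + d) * f (x + k)

section LogConcaveSequence

variable {u : ℕ → ℝ}

theorem apply_add_eq_zero (hzero : ∀ n, u n = 0 → u (n + 1) = 0) {n : ℕ} (hn : u n = 0)
    (d : ℕ) : u (n + d) = 0 := by
  induction d with
  | zero => exact hn
  | succ d ih => exact hzero _ ih

theorem mul_add_add_one_le_of_mul_le_sq (hu : ∀ n, 0 ≤ u n)
    (hzero : ∀ n, u n = 0 → u (n + 1) = 0) (hsq : ∀ n, u n * u (n + 2) ≤ u (n + 1) ^ 2)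
    (n d : ℕ) : u n * u (n + d + 1) ≤ u (n + 1) * u (n + d) := by
  induction d with
  | zero => rw [add_zero, mul_comm]
  | succ d ih =>
    rcases (hu (n + d)).eq_or_lt' with h0 | hpos
    · have h2 : u (n + (d + 1) + 1) = 0 := hzero _ (hzero _ h0)
      rw [h2, mul_zero]
      exact mul_nonneg (hu _) (hu _)
    · refine le_of_mul_le_mul_right ?_ hpos
      calc u n * u (n + d + 2) * u (n + d) = u n * (u (n + d) * u (n + d + 2)) := by ring
        _ ≤ u n * u (n + d + 1) ^ 2 := mul_le_mul_of_nonneg_left (hsq _) (hu n)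
        _ = u n * u (n + d + 1) * u (n + d + 1) := by ring
        _ ≤ u (n + 1) * u (n + d) * u (n + d + 1) := mul_le_mul_of_nonneg_right ih (hu _)
        _ = u (n + 1) * u (n + d + 1) * u (n + d) := by ring

theorem StrongLogConcave.of_mul_le_sq (hu : ∀ n, 0 ≤ u n)
    (hzero : ∀ n, u n = 0 → u (n + 1) = 0) (hsq : ∀ n, u n * u (n + 2) ≤ u (n + 1) ^ 2) :
    StrongLogConcave u := by
  intro n d k
  induction k with
  | zero => rw [add_zero, add_zero, mul_comm]
  | succ k ih =>
    rcases (hu (n + k)).eq_or_lt' with h0 | hpos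
    · have h1 : u (n + d + (k + 1)) = 0 := by
        rw [show n + d + (k + 1) = n + k + (d + 1) by ring]
        exact apply_add_eq_zero hzero h0 _
      rw [h1, mul_zero]
      exact mul_nonneg (hu _) (hu _)
    · refine le_of_mul_le_mul_right ?_ hpos
      calc u n * u (n + d + (k + 1)) * u (n + k)
          = u n * (u (n + k) * u (n + k + d + 1)) := by
            rw [show n + k + d + 1 = n + d + (k + 1) by ring]; ring
        _ ≤ u n * (u (n + k + 1) * u (n + k + d)) :=
            mul_le_mul_of_nonneg_left (mul_add_add_one_le_of_mul_le_sq hu hzero hsq _ _) (hu n)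
        _ = u n * u (n + d + k) * u (n + k + 1) := by rw [add_right_comm n k d]; ring
        _ ≤ u (n + d) * u (n + k) * u (n + k + 1) := mul_le_mul_of_nonneg_right ih (hu _)
        _ = u (n + d) * u (n + (k + 1)) * u (n + k) := by rw [← add_assoc n k 1]; ring

end LogConcaveSequence

theorem mul_le_sq_of_midpoint_concave {a₀ a₁ a₂ b₀ b₁ b₂ t₀ t₁ t₂ t₃ : ℝ}
    (ha₀ : 0 ≤ a₀) (ha₂ : 0 ≤ a₂) (hb₀ : 0 ≤ b₀) (hb₂ : 0 ≤ b₂) (ht₁ : 0 ≤ t₁) (ht₂ : 0 ≤ t₂)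
    (ha : a₀ + a₂ ≤ 2 * a₁) (hb : b₀ + b₂ ≤ 2 * b₁)
    (h₀₂ : t₀ * t₂ ≤ t₁ ^ 2) (h₁₃ : t₁ * t₃ ≤ t₂ ^ 2) (h₀₃ : t₀ * t₃ ≤ t₁ * t₂) :
    (a₀ * t₁ + b₀ * t₀) * (a₂ * t₃ + b₂ * t₂) ≤ (a₁ * t₂ + b₁ * t₁) ^ 2 :=
  calc (a₀ * t₁ + b₀ * t₀) * (a₂ * t₃ + b₂ * t₂)
      = a₀ * a₂ * (t₁ * t₃) + a₀ * b₂ * (t₁ * t₂) + a₂ * b₀ * (t₀ * t₃)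
        + b₀ * b₂ * (t₀ * t₂) := by ring
    _ ≤ a₀ * a₂ * t₂ ^ 2 + a₀ * b₂ * (t₁ * t₂) + a₂ * b₀ * (t₁ * t₂) + b₀ * b₂ * t₁ ^ 2 := by
      gcongr
    _ ≤ ((a₀ + a₂) / 2 * t₂ + (b₀ + b₂) / 2 * t₁) ^ 2 := by
      linarith [sq_nonneg ((a₀ - a₂) / 2 * t₂ + (b₀ - b₂) / 2 * t₁)]
    _ ≤ (a₁ * t₂ + b₁ * t₁) ^ 2 := by
      gcongr <;> linarith

theorem factorial_mul_multichoose (γ : ℝ) (N : ℕ) :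
    (N ! : ℝ) * Ring.multichoose γ N = ∏ i ∈ range N, (γ + i) := by
  rw [← nsmul_eq_mul, Ring.factorial_nsmul_multichoose_eq_ascPochhammer,
    Polynomial.ascPochhammer_smeval_eq_eval]
  induction N with
  | zero => simp
  | succ N ih => rw [ascPochhammer_succ_eval, ih, prod_range_succ]

theorem succ_mul_multichoose_succ (γ : ℝ) (N : ℕ) :
    (N + 1) * Ring.multichoose γ (N + 1) = (γ + N) * Ring.multichoose γ N := by
  refine mul_left_cancel₀ (Nat.cast_ne_zero.2 N.factorial_ne_zero : (N ! : ℝ) ≠ 0) ?_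
  calc (N ! : ℝ) * ((N + 1) * Ring.multichoose γ (N + 1))
      = ((N + 1)! : ℝ) * Ring.multichoose γ (N + 1) := by
        rw [Nat.factorial_succ]; push_cast; ring
    _ = (N ! : ℝ) * Ring.multichoose γ N * (γ + N) := by
        rw [factorial_mul_multichoose, factorial_mul_multichoose, prod_range_succ]
    _ = (N ! : ℝ) * ((γ + N) * Ring.multichoose γ N) := by ring

/-- The coefficient of `z ^ N` in `(1 - z) ^ (-β) * (1 - (1 - z) ^ α) ^ n`, written as an `n`-th
difference of the coefficients of the powers `(1 - z) ^ (-γ)`. As a sequence in `n` it is a discrete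
analogue of the Wright function `x ↦ φ(-α, β, -x)`. -/
noncomputable def discreteWright (α β : ℝ) (N n : ℕ) : ℝ :=
  (-1) ^ n * (fwdDiff (-α))^[n] (fun γ : ℝ => Ring.multichoose γ N) β

namespace discreteWright

variable {α β : ℝ}

theorem zero_right (α β : ℝ) (N : ℕ) : discreteWright α β N 0 = Ring.multichoose β N := by
  simp [discreteWright]

theorem succ_right (α β : ℝ) (N n : ℕ) :
    discreteWright α β N (n + 1) = discreteWright α β N n - discreteWright α (β - α) N n := by
  simp only [discreteWright, Function.iterate_succ_apply', fwdDiff, ← sub_eq_add_neg]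
  ring

theorem zero_left_succ (α β : ℝ) (n : ℕ) : discreteWright α β 0 (n + 1) = 0 := by
  induction n generalizing β with
  | zero => simp [succ_right, zero_right]
  | succ n ih => rw [succ_right, ih, ih, sub_zero]

theorem succ_mul_succ_left (α β : ℝ) (N n : ℕ) :
    (N + 1) * discreteWright α β (N + 1) n =
      (N + β - n * α) * discreteWright α β N n + n * α * discreteWright α β N (n - 1) := by
  induction n generalizing β with
  | zero =>
    simp only [zero_right, succ_mul_multichoose_succ]
    push_cast
    ring
  | succ n ih =>
    have hpred : n * (discreteWright α β N (n - 1) - discreteWright α (β - α) N (n - 1)) =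
        n * discreteWright α β N n := by
      cases n with
      | zero => simp
      | succ n => rw [succ_right, Nat.add_sub_cancel]
    rw [succ_right α β (N + 1), mul_sub, ih, ih, succ_right α β N, Nat.add_sub_cancel]
    push_cast
    linear_combination α * hpred

theorem eq_zero_of_lt {N n : ℕ} (h : N < n) : discreteWright α β N n = 0 := by
  induction N generalizing n with
  | zero =>
    obtain ⟨n, rfl⟩ := Nat.exists_eq_succ_of_ne_zero h.ne'
    exact zero_left_succ α β n
  | succ N ih =>
    have hrec := succ_mul_succ_left α β N n
    rw [ih (by lia), ih (by lia), mul_zero, mul_zero, add_zero] at hrec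
    exact (mul_eq_zero.1 hrec).resolve_left (by positivity)

theorem pos (hα₀ : 0 < α) (hα₁ : α ≤ 1) (hβ : 0 < β) {N n : ℕ} (h : n ≤ N) :
    0 < discreteWright α β N n := by
  induction N generalizing n with
  | zero => obtain rfl := Nat.le_zero.1 h; simp [zero_right]
  | succ N ih =>
    refine pos_of_mul_pos_right ?_ (by positivity : (0 : ℝ) ≤ N + 1)
    rw [succ_mul_succ_left]
    have hpred : 0 < discreteWright α β N (n - 1) := ih (by lia)
    rcases h.lt_or_eq with hlt | rfl
    · have hn : (n : ℝ) ≤ N := by exact_mod_cast Nat.lt_succ_iff.1 hlt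
      have hcoeff : 0 < N + β - n * α := by nlinarith
      have hw : 0 < discreteWright α β N n := ih (by lia)
      positivity
    · rw [eq_zero_of_lt (Nat.lt_succ_self N), mul_zero, zero_add]
      positivity

theorem nonneg (hα₀ : 0 < α) (hα₁ : α ≤ 1) (hβ : 0 < β) (N n : ℕ) :
    0 ≤ discreteWright α β N n :=
  (le_or_gt n N).elim (fun h => (pos hα₀ hα₁ hβ h).le) fun h => (eq_zero_of_lt h).ge

theorem succ_eq_zero (hα₀ : 0 < α) (hα₁ : α ≤ 1) (hβ : 0 < β) {N n : ℕ}
    (h : discreteWright α β N n = 0) : discreteWright α β N (n + 1) = 0 := by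
  refine eq_zero_of_lt ?_
  by_contra! hlt
  exact (pos hα₀ hα₁ hβ (Nat.le_of_succ_le hlt)).ne' h

theorem mul_le_sq_succ (hα₀ : 0 < α) (hα₁ : α ≤ 1) (hαβ : α ≤ β) {N : ℕ}
    (hN : StrongLogConcave (discreteWright α β N)) (n : ℕ) :
    discreteWright α β (N + 1) n * discreteWright α β (N + 1) (n + 2) ≤
      discreteWright α β (N + 1) (n + 1) ^ 2 := by
  rcases lt_or_ge (N + 1) (n + 2) with hlt | hle
  · rw [eq_zero_of_lt hlt, mul_zero]
    exact sq_nonneg _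
  have hw := nonneg hα₀ hα₁ (hα₀.trans_le hαβ) N
  -- For `n = 0` the coefficient of the predecessor vanishes and `0` can stand in for it.
  obtain ⟨t₀, ht₀, h₀₂, h₀₃⟩ : ∃ t₀, n * α * discreteWright α β N (n - 1) = n * α * t₀ ∧
      t₀ * discreteWright α β N (n + 1) ≤ discreteWright α β N n ^ 2 ∧
      t₀ * discreteWright α β N (n + 2) ≤
        discreteWright α β N n * discreteWright α β N (n + 1) := by
    rcases n with _ | n
    · exact ⟨0, by simp, by rw [zero_mul]; exact sq_nonneg _,
        by rw [zero_mul]; exact mul_nonneg (hw _) (hw _)⟩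
    · exact ⟨_, rfl, (hN n 1 1).trans_eq (sq _).symm, hN n 1 2⟩
  have hcoeff : 0 ≤ N + β - (n + 2 : ℕ) * α := by
    have hn : (n : ℝ) + 1 ≤ N := by exact_mod_cast Nat.le_of_succ_le_succ hle
    push_cast
    nlinarith
  refine le_of_mul_le_mul_left ?_ (by positivity : (0 : ℝ) < (N + 1) ^ 2)
  calc ((N : ℝ) + 1) ^ 2 * (discreteWright α β (N + 1) n * discreteWright α β (N + 1) (n + 2))
      = ((N + 1) * discreteWright α β (N + 1) n) *
          ((N + 1) * discreteWright α β (N + 1) (n + 2)) := by ring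
    _ ≤ ((N + 1) * discreteWright α β (N + 1) (n + 1)) ^ 2 := by
      simp only [succ_mul_succ_left, ht₀]
      refine mul_le_sq_of_midpoint_concave ?_ hcoeff (by positivity) (by positivity) (hw _) (hw _)
        ?_ ?_ h₀₂ ((hN n 1 1).trans_eq (sq _).symm) h₀₃ <;> push_cast at hcoeff ⊢ <;> linarith
    _ = ((N : ℝ) + 1) ^ 2 * discreteWright α β (N + 1) (n + 1) ^ 2 := by ring

theorem strongLogConcave (hα₀ : 0 < α) (hα₁ : α ≤ 1) (hαβ : α ≤ β) (N : ℕ) :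
    StrongLogConcave (discreteWright α β N) := by
  have hβ : 0 < β := hα₀.trans_le hαβ
  induction N with
  | zero =>
    refine .of_mul_le_sq (nonneg hα₀ hα₁ hβ 0) (fun _ => succ_eq_zero hα₀ hα₁ hβ) fun n => ?_
    rw [zero_left_succ α β (n + 1), mul_zero]
    exact sq_nonneg _
  | succ N ih =>
    exact .of_mul_le_sq (nonneg hα₀ hα₁ hβ _) (fun _ => succ_eq_zero hα₀ hα₁ hβ)
      (mul_le_sq_succ hα₀ hα₁ hαβ ih)

end discreteWright

theorem inv_Gamma_eq_mul_inv_Gamma_add_one (γ : ℝ) :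
    (Real.Gamma γ)⁻¹ = γ * (Real.Gamma (γ + 1))⁻¹ := by
  have h := Complex.one_div_Gamma_eq_self_mul_one_div_Gamma_add_one γ
  rw [← Complex.ofReal_one, ← Complex.ofReal_add, Complex.Gamma_ofReal, Complex.Gamma_ofReal] at h
  exact_mod_cast h

theorem inv_Gamma_eq_multichoose (γ : ℝ) (N : ℕ) :
    (Real.Gamma γ)⁻¹ = N ! * Ring.multichoose γ N * (Real.Gamma (γ + N))⁻¹ := by
  rw [factorial_mul_multichoose]
  induction N with
  | zero => simp
  | succ N ih =>
    rw [ih, inv_Gamma_eq_mul_inv_Gamma_add_one (γ + N), prod_range_succ, Nat.cast_succ, ← add_assoc,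
      mul_assoc]

theorem multichoose_eq_Gamma {γ : ℝ} {N : ℕ} (h : 0 < γ + N) :
    Ring.multichoose γ N = (Real.Gamma γ)⁻¹ * Real.Gamma (γ + N) / N ! := by
  have hΓ := (Real.Gamma_pos_of_pos h).ne'
  rw [inv_Gamma_eq_multichoose γ N]
  field_simp

theorem tendsto_rpow_mul_multichoose (γ : ℝ) :
    Tendsto (fun N : ℕ => (N : ℝ) ^ (1 - γ) * Ring.multichoose γ N) atTop
      (𝓝 (Real.Gamma γ)⁻¹) := by
  have hev : ∀ᶠ N : ℕ in atTop, 0 < γ + N := by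
    filter_upwards [eventually_gt_atTop ⌈-γ⌉₊] with N hN
    linarith [Nat.lt_of_ceil_lt hN]
  by_cases hΓ : Real.Gamma γ = 0
  · refine tendsto_nhds_of_eventually_eq ?_
    filter_upwards [hev] with N hN
    simp [multichoose_eq_Gamma hN, hΓ]
  · have hlim := (tendsto_natCast_div_add_atTop (𝕜 := ℝ) γ).mul
      ((Real.GammaSeq_tendsto_Gamma γ).inv₀ hΓ)
    rw [one_mul] at hlim
    refine hlim.congr' ?_
    filter_upwards [hev, eventually_gt_atTop 0] with N hN hN₀
    have hNpos : (0 : ℝ) < N := by exact_mod_cast hN₀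
    rw [Real.GammaSeq, prod_range_succ, ← factorial_mul_multichoose, Real.rpow_sub hNpos,
      Real.rpow_one]
    have hne : (N : ℝ) + γ ≠ 0 := by linarith
    field_simp
    ring

theorem abs_inv_Gamma_neg_le {s : ℝ} (hs : 0 ≤ s) : |(Real.Gamma (-s))⁻¹| ≤ Real.Gamma (1 + s) := by
  have hΓ : 0 < Real.Gamma (1 + s) := Real.Gamma_pos_of_pos (by linarith)
  have hrefl : Real.Gamma (-s) * Real.Gamma (1 + s) = π / Real.sin (π * -s) := by
    simpa using Real.Gamma_mul_Gamma_one_sub (-s)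
  have hinv : (Real.Gamma (-s))⁻¹ = Real.Gamma (1 + s) * (Real.sin (π * -s) / π) := by
    rw [← inv_div π, ← hrefl, mul_inv, mul_comm (Real.Gamma (-s))⁻¹, mul_inv_cancel_left₀ hΓ.ne']
  rw [hinv, abs_mul, abs_of_pos hΓ, abs_div, abs_of_pos Real.pi_pos]
  refine mul_le_of_le_one_right hΓ.le ((div_le_one Real.pi_pos).2 ?_)
  linarith [Real.abs_sin_le_one (π * -s), Real.pi_gt_three]

theorem Gamma_mul_rpow_le_Gamma_add {y r : ℝ} (hy : 0 < y) (hr : 1 ≤ r) :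
    Real.Gamma y * y ^ r ≤ Real.Gamma (y + r) := by
  rcases hr.eq_or_lt with rfl | hr
  · rw [Real.rpow_one, Real.Gamma_add_one hy.ne', mul_comm]
  have hr₀ : 0 < r := by linarith
  have hΓy := Real.Gamma_pos_of_pos hy
  have hΓyr : 0 < Real.Gamma (y + r) := Real.Gamma_pos_of_pos (by linarith)
  have hconvex := Real.Gamma_mul_add_mul_le_rpow_Gamma_mul_rpow_Gamma (s := y) (t := y + r)
    (a := 1 - 1 / r) (b := 1 / r) hy (by linarith)
    (by rw [sub_pos, div_lt_one hr₀]; exact hr) (by positivity) (by ring)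
  rw [show (1 - 1 / r) * y + 1 / r * (y + r) = y + 1 by field_simp; ring,
    Real.Gamma_add_one hy.ne'] at hconvex
  have hpow := Real.rpow_le_rpow (by positivity) hconvex hr₀.le
  rw [Real.mul_rpow hy.le hΓy.le, Real.mul_rpow (by positivity) (by positivity),
    ← Real.rpow_mul hΓy.le, ← Real.rpow_mul hΓyr.le, one_div_mul_cancel hr₀.ne', Real.rpow_one,
    show (1 - 1 / r) * r = r - 1 by field_simp, Real.rpow_sub hΓy, Real.rpow_one,
    div_mul_eq_mul_div, le_div_iff₀ hΓy] at hpow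
  refine le_of_mul_le_mul_left ?_ (Real.rpow_pos_of_pos hΓy r)
  linarith

theorem Gamma_one_add_le_factorial_rpow {α s : ℝ} {j : ℕ} (hα₀ : 0 ≤ α) (hα₁ : α < 1)
    (hs : 0 ≤ s) (hsj : s ≤ α * j) : Real.Gamma (1 + s) ≤ (j ! : ℝ) ^ α := by
  have hfact : (1 : ℝ) ≤ j ! := by exact_mod_cast j.factorial_pos
  rcases hs.eq_or_lt with rfl | hs
  · rw [add_zero, Real.Gamma_one]
    exact Real.one_le_rpow hfact hα₀
  have hj : (0 : ℝ) < j := pos_of_mul_pos_right (hs.trans_le hsj) hα₀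
  have hθ : s / j ≤ α := (div_le_iff₀ hj).2 hsj
  have hconvex := Real.Gamma_mul_add_mul_le_rpow_Gamma_mul_rpow_Gamma (s := 1) (t := j + 1)
    (a := 1 - s / j) (b := s / j) one_pos (by positivity) (by linarith) (by positivity) (by ring)
  rw [show (1 - s / j) * 1 + s / j * (j + 1) = 1 + s by field_simp; ring, Real.Gamma_one,
    Real.one_rpow, one_mul, Real.Gamma_nat_eq_factorial] at hconvex
  exact hconvex.trans (Real.rpow_le_rpow_of_exponent_le hfact hθ)

theorem rpow_mul_abs_multichoose_neg_le {s : ℝ} {N : ℕ} (hs : 0 ≤ s) (hN : 1 ≤ N)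
    (hsN : s ≤ N / 2) :
    (N : ℝ) ^ (1 + s) * |Ring.multichoose (-s) N| ≤ 2 ^ (1 + s) * Real.Gamma (1 + s) := by
  have hNpos : (1 : ℝ) ≤ N := by exact_mod_cast hN
  have hy : 0 < -s + N := by linarith
  have hΓ : 0 < Real.Gamma (1 + s) := Real.Gamma_pos_of_pos (by linarith)
  have hΓy := Real.Gamma_pos_of_pos hy
  have hfact : Real.Gamma (-s + N) * (-s + N) ^ (1 + s) ≤ N ! := by
    have h := Gamma_mul_rpow_le_Gamma_add hy (le_add_of_nonneg_right hs)
    rwa [show -s + N + (1 + s) = N + 1 by ring, Real.Gamma_nat_eq_factorial] at h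
  calc (N : ℝ) ^ (1 + s) * |Ring.multichoose (-s) N|
      = N ^ (1 + s) * (|(Real.Gamma (-s))⁻¹| * Real.Gamma (-s + N) / N !) := by
        rw [multichoose_eq_Gamma hy, abs_div, abs_mul, abs_of_pos hΓy, Nat.abs_cast]
    _ ≤ (2 * (-s + N)) ^ (1 + s) * (Real.Gamma (1 + s) * Real.Gamma (-s + N) / N !) := by
        gcongr
        · linarith
        · exact abs_inv_Gamma_neg_le hs
    _ = 2 ^ (1 + s) * Real.Gamma (1 + s) * (Real.Gamma (-s + N) * (-s + N) ^ (1 + s) / N !) := by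
        rw [Real.mul_rpow two_pos.le hy.le]; ring
    _ ≤ 2 ^ (1 + s) * Real.Gamma (1 + s) :=
        mul_le_of_le_one_right (mul_nonneg (by positivity) hΓ.le)
          ((div_le_one (by positivity)).2 hfact)

theorem summable_pow_mul_factorial_rpow (c : ℝ) {κ : ℝ} (hκ : κ < 0) :
    Summable fun j : ℕ => c ^ j * (j ! : ℝ) ^ κ := by
  have hratio : Tendsto (fun j : ℕ => |c| * ((j + 1 : ℕ) : ℝ) ^ κ) atTop (𝓝 0) := by
    rw [← mul_zero |c|, ← neg_neg κ]
    exact ((tendsto_rpow_neg_atTop (neg_pos.2 hκ)).comp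
      (tendsto_natCast_atTop_atTop.comp (tendsto_add_atTop_nat 1))).const_mul _
  refine summable_of_ratio_norm_eventually_le one_half_lt_one ?_
  filter_upwards [hratio.eventually_le_const one_half_pos] with j hj
  calc ‖c ^ (j + 1) * ((j + 1)! : ℝ) ^ κ‖
      = |c| * ((j + 1 : ℕ) : ℝ) ^ κ * ‖c ^ j * (j ! : ℝ) ^ κ‖ := by
        rw [Nat.factorial_succ, Nat.cast_mul, Real.mul_rpow (by positivity) (by positivity),
          pow_succ, norm_mul, norm_mul, norm_mul, norm_mul, Real.norm_eq_abs c,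
          Real.norm_of_nonneg (by positivity : 0 ≤ ((j + 1 : ℕ) : ℝ) ^ κ)]
        ring
    _ ≤ 1 / 2 * ‖c ^ j * (j ! : ℝ) ^ κ‖ := by gcongr

theorem tendsto_choose_div_pow {ι : Type*} {l : Filter ι} {m : ι → ℕ} {s : ι → ℝ} {x : ℝ}
    (hs : Tendsto s l atTop) (hm : Tendsto (fun i => m i / s i) l (𝓝 x)) (j : ℕ) :
    Tendsto (fun i => (m i).choose j / s i ^ j) l (𝓝 (x ^ j / j !)) := by
  have hfactor : ∀ k ∈ range j, Tendsto (fun i => m i / s i - k / s i) l (𝓝 x) := fun k _ => by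
    simpa using hm.sub (hs.const_div_atTop (k : ℝ))
  have hprod := (tendsto_finsetProd _ hfactor).div_const (j ! : ℝ)
  rw [prod_const, card_range] at hprod
  refine hprod.congr fun i => ?_
  simp_rw [← sub_div]
  rw [prod_div_distrib, prod_const, card_range, Nat.cast_choose_eq_descPochhammer_div,
    descPochhammer_eval_eq_prod_range, div_right_comm]

theorem choose_div_pow_le {m : ℕ} {s y : ℝ} (hs : 0 < s) (hm : m / s ≤ y) (j : ℕ) :
    m.choose j / s ^ j ≤ y ^ j / j ! :=
  calc m.choose j / s ^ j ≤ (m ^ j / j ! : ℝ) / s ^ j := by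
        gcongr
        exact Nat.choose_le_pow_div j m
    _ = (m / s) ^ j / j ! := by rw [div_pow, div_right_comm]
    _ ≤ y ^ j / j ! := by gcongr

theorem discreteWright.eq_tsum (α β : ℝ) (N n : ℕ) :
    discreteWright α β N n =
      ∑' j : ℕ, (-1) ^ j * n.choose j * Ring.multichoose (β - α * j) N := by
  rw [tsum_eq_sum (s := range (n + 1)), discreteWright, fwdDiff_iter_eq_sum_shift, mul_sum]
  · refine sum_congr rfl fun j hj => ?_
    have hsign : (-1 : ℝ) ^ n * (-1) ^ (n - j) = (-1) ^ j := by
      rw [← pow_add, show n + (n - j) = j + 2 * (n - j) by grind, pow_add, pow_mul]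
      simp
    rw [zsmul_eq_mul, nsmul_eq_mul, mul_neg, ← sub_eq_add_neg, mul_comm (j : ℝ)]
    push_cast
    rw [← hsign]
    ring
  · intro j hj
    rw [Nat.choose_eq_zero_of_lt (by simpa using hj)]
    simp

variable {α β : ℝ}

theorem exists_summable_bound_multichoose (hα₀ : 0 < α) (hα₁ : α < 1) (hβ : 0 ≤ β) (y : ℝ) :
    ∃ C : ℕ → ℝ, (∀ j, 0 ≤ C j) ∧ Summable (fun j => C j * (y ^ j / j !)) ∧
      ∀ j N : ℕ, 1 ≤ N → α * j ≤ N / 2 →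
        |(N : ℝ) ^ (1 - (β - α * j)) * Ring.multichoose (β - α * j) N| ≤ C j := by
  have hbdd : ∀ j : ℕ, ∃ B, ∀ N : ℕ,
      |(N : ℝ) ^ (1 - (β - α * j)) * Ring.multichoose (β - α * j) N| ≤ B := fun j => by
    obtain ⟨B, hB⟩ := (tendsto_rpow_mul_multichoose (β - α * j)).abs.bddAbove_range
    exact ⟨B, fun N => hB ⟨N, rfl⟩⟩
  choose B hB using hbdd
  refine ⟨fun j => if β ≤ α * j then 2 ^ (1 + j) * (j ! : ℝ) ^ α else B j,
    fun j => ?_, ?_, fun j N hN hjN => ?_⟩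
  · dsimp only
    split_ifs
    · positivity
    · exact (abs_nonneg _).trans (hB j 0)
  · refine ((summable_pow_mul_factorial_rpow (2 * y) (sub_neg.2 hα₁)).mul_left 2).congr_atTop ?_
    filter_upwards [eventually_ge_atTop ⌈β / α⌉₊] with j hj
    rw [if_pos ((div_le_iff₀' hα₀).1 (Nat.ceil_le.1 hj)), Real.rpow_sub_one (by positivity)]
    ring
  · dsimp only
    split_ifs with hβj
    · rw [← neg_sub (α * j) β, sub_neg_eq_add, abs_mul, abs_of_nonneg (by positivity)]
      have hs : 0 ≤ α * j - β := sub_nonneg.2 hβj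
      have hsj : α * j - β ≤ j := by nlinarith
      calc (N : ℝ) ^ (1 + (α * j - β)) * |Ring.multichoose (-(α * j - β)) N|
          ≤ 2 ^ (1 + (α * j - β)) * Real.Gamma (1 + (α * j - β)) :=
            rpow_mul_abs_multichoose_neg_le hs hN (by linarith)
        _ ≤ 2 ^ (1 + (j : ℝ)) * (j ! : ℝ) ^ α := by
            gcongr
            · exact one_le_two
            · exact Gamma_one_add_le_factorial_rpow hα₀.le hα₁ hs (by linarith)
        _ = 2 ^ (1 + j) * (j ! : ℝ) ^ α := by norm_cast
    · exact hB j N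

theorem tendsto_div_natCast_of_tendsto_div_rpow (hα : α < 1) {u : ℕ → ℝ} {x : ℝ}
    (hu : Tendsto (fun N => u N / (N : ℝ) ^ α) atTop (𝓝 x)) :
    Tendsto (fun N => u N / (N : ℝ)) atTop (𝓝 0) := by
  have hpow : Tendsto (fun N : ℕ => (N : ℝ) ^ (-(1 - α))) atTop (𝓝 0) :=
    (tendsto_rpow_neg_atTop (sub_pos.2 hα)).comp tendsto_natCast_atTop_atTop
  refine (mul_zero x ▸ hu.mul hpow).congr' ?_
  filter_upwards [eventually_gt_atTop 0] with N hN
  have hNpos : (0 : ℝ) < N := by exact_mod_cast hN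
  rw [neg_sub, Real.rpow_sub_one hNpos.ne']
  field_simp

theorem rpow_mul_discreteWright_eq_tsum (α β : ℝ) {N : ℕ} (hN : 0 < N) (n : ℕ) :
    (N : ℝ) ^ (1 - β) * discreteWright α β N n =
      ∑' j : ℕ, (-1) ^ j * (n.choose j / ((N : ℝ) ^ α) ^ j *
        (N ^ (1 - (β - α * j)) * Ring.multichoose (β - α * j) N)) := by
  have hNpos : (0 : ℝ) < N := by exact_mod_cast hN
  rw [discreteWright.eq_tsum, ← tsum_mul_left]
  refine tsum_congr fun j => ?_
  rw [show 1 - (β - α * j) = 1 - β + α * j by ring, Real.rpow_add hNpos,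
    Real.rpow_mul_natCast hNpos.le]
  field_simp

theorem wright_neg_eq_tsum (α β x : ℝ) :
    wright (-α) β (-x) =
      ∑' j : ℕ, (-1) ^ j * (x ^ j / j ! * (Real.Gamma (β - α * j))⁻¹) := by
  refine tsum_congr fun j => ?_
  rw [neg_pow, neg_mul, ← sub_eq_add_neg]
  ring

-- Termwise, `(m N).choose j ~ (x * N ^ α) ^ j / j !` and
-- `Ring.multichoose (β - α * j) N ~ N ^ (β - α * j - 1) / Γ(β - α * j)`.
theorem tendsto_rpow_mul_discreteWright (hα₀ : 0 < α) (hα₁ : α < 1) (hβ : 0 ≤ β) {x : ℝ}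
    {m : ℕ → ℕ} (hm : Tendsto (fun N => m N / (N : ℝ) ^ α) atTop (𝓝 x)) :
    Tendsto (fun N : ℕ => (N : ℝ) ^ (1 - β) * discreteWright α β N (m N)) atTop
      (𝓝 (wright (-α) β (-x))) := by
  have hscale : Tendsto (fun N : ℕ => (N : ℝ) ^ α) atTop atTop :=
    (tendsto_rpow_atTop hα₀).comp tendsto_natCast_atTop_atTop
  obtain ⟨C, hCnonneg, hCsum, hC⟩ := exists_summable_bound_multichoose hα₀ hα₁ hβ (x + 1)
  refine Tendsto.congr' (EventuallyEq.symm ((eventually_gt_atTop 0).mono fun N hN =>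
    rpow_mul_discreteWright_eq_tsum α β hN (m N))) ?_
  rw [wright_neg_eq_tsum]
  refine tendsto_tsum_of_dominated_convergence hCsum (fun j =>
    ((tendsto_choose_div_pow hscale hm j).mul (tendsto_rpow_mul_multichoose _)).const_mul _) ?_
  filter_upwards [eventually_ge_atTop 1, hm.eventually_le_const (lt_add_one x),
    (tendsto_div_natCast_of_tendsto_div_rpow hα₁ hm).eventually_le_const one_half_pos]
    with N hN hmx hmN j
  have hNpos : (0 : ℝ) < N := by exact_mod_cast hN
  rw [norm_mul, norm_pow, norm_neg, norm_one, one_pow, one_mul, norm_mul, mul_comm,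
    Real.norm_of_nonneg (by positivity : 0 ≤ (m N).choose j / ((N : ℝ) ^ α) ^ j)]
  have hchoose := choose_div_pow_le (by positivity : 0 < (N : ℝ) ^ α) hmx j
  rcases lt_or_ge (m N) j with hlt | hle
  · rw [Nat.choose_eq_zero_of_lt hlt, Nat.cast_zero, zero_div] at hchoose ⊢
    rw [mul_zero]
    exact mul_nonneg (hCnonneg j) hchoose
  · have hj : (j : ℝ) ≤ m N := by exact_mod_cast hle
    have hjN : α * j ≤ N / 2 := by
      rw [div_le_iff₀ hNpos] at hmN
      nlinarith
    exact mul_le_mul (hC j N hN hjN) hchoose (by positivity) (hCnonneg j)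

theorem tendsto_floor_mul_rpow_div_rpow (hα : 0 < α) {x : ℝ} (hx : 0 ≤ x) :
    Tendsto (fun N : ℕ => (⌊x * (N : ℝ) ^ α⌋₊ : ℝ) / (N : ℝ) ^ α) atTop (𝓝 x) :=
  (tendsto_nat_floor_mul_div_atTop hx).comp
    ((tendsto_rpow_atTop hα).comp tendsto_natCast_atTop_atTop)

theorem wright_neg_nonneg (hα₀ : 0 < α) (hα₁ : α < 1) (hβ : 0 < β) {x : ℝ} (hx : 0 ≤ x) :
    0 ≤ wright (-α) β (-x) :=
  ge_of_tendsto' (tendsto_rpow_mul_discreteWright hα₀ hα₁ hβ.le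
    (tendsto_floor_mul_rpow_div_rpow hα₀ hx)) fun N =>
      mul_nonneg (by positivity) (discreteWright.nonneg hα₀ hα₁.le hβ N _)

theorem strongLogConcave_wright_neg (hα₀ : 0 < α) (hα₁ : α < 1) (hαβ : α ≤ β) :
    StrongLogConcave fun x : ℝ≥0 => wright (-α) β (-x) := by
  intro x d k
  have hβ : 0 ≤ β := hα₀.le.trans hαβ
  have hx := tendsto_floor_mul_rpow_div_rpow hα₀ x.2
  have hd := tendsto_floor_mul_rpow_div_rpow hα₀ d.2
  have hk := tendsto_floor_mul_rpow_div_rpow hα₀ k.2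
  have hlim {y : ℝ} {m : ℕ → ℕ} (hm : Tendsto (fun N => m N / (N : ℝ) ^ α) atTop (𝓝 y)) :=
    tendsto_rpow_mul_discreteWright hα₀ hα₁ hβ hm
  have hadd {y z : ℝ} {m n : ℕ → ℕ} (hm : Tendsto (fun N => m N / (N : ℝ) ^ α) atTop (𝓝 y))
      (hn : Tendsto (fun N => n N / (N : ℝ) ^ α) atTop (𝓝 z)) :
      Tendsto (fun N => ((m N + n N : ℕ) : ℝ) / (N : ℝ) ^ α) atTop (𝓝 (y + z)) := by
    simpa only [Nat.cast_add, add_div] using hm.add hn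
  refine le_of_tendsto_of_tendsto' ((hlim hx).mul (hlim (hadd (hadd hx hd) hk)))
    ((hlim (hadd hx hd)).mul (hlim (hadd hx hk))) fun N => ?_
  rw [mul_mul_mul_comm, mul_mul_mul_comm _ (discreteWright α β N (_ + _))]
  exact mul_le_mul_of_nonneg_left (discreteWright.strongLogConcave hα₀ hα₁.le hαβ N _ _ _)
    (by positivity)

theorem hasFPowerSeriesOnBall_tsum {c : ℕ → ℝ} (hc : ∀ x : ℝ, Summable fun n => c n * x ^ n) :
    HasFPowerSeriesOnBall (fun x => ∑' n, c n * x ^ n)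
      (FormalMultilinearSeries.ofScalars ℝ c) 0 ⊤ := by
  have hradius : (FormalMultilinearSeries.ofScalars ℝ c).radius = ⊤ :=
    ENNReal.eq_top_of_forall_nnreal_le fun r =>
      FormalMultilinearSeries.le_radius_of_summable _ (by
        simpa [FormalMultilinearSeries.ofScalars_norm] using (hc r).norm)
  have h := (FormalMultilinearSeries.ofScalars ℝ c).hasFPowerSeriesOnBall
    (hradius ▸ ENNReal.zero_lt_top)
  rw [hradius] at h
  exact h.congr fun x _ => FormalMultilinearSeries.ofScalars_sum_eq c x

theorem summable_wright (hα₀ : 0 < α) (hα₁ : α < 1) (hβ : 0 ≤ β) (x : ℝ) :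
    Summable fun n : ℕ => x ^ n / (n ! * Real.Gamma (β + -α * n)) := by
  refine .of_norm_bounded_eventually_nat
    (summable_pow_mul_factorial_rpow |x| (sub_neg.2 hα₁)) ?_
  filter_upwards [eventually_ge_atTop ⌈β / α⌉₊] with n hn
  have hs : 0 ≤ α * n - β := sub_nonneg.2 ((div_le_iff₀' hα₀).1 (Nat.ceil_le.1 hn))
  have hΓ : |(Real.Gamma (β + -α * n))⁻¹| ≤ (n ! : ℝ) ^ α := by
    rw [show β + -α * n = -(α * n - β) by ring]
    exact (abs_inv_Gamma_neg_le hs).trans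
      (Gamma_one_add_le_factorial_rpow hα₀.le hα₁ hs (by linarith))
  calc ‖x ^ n / (n ! * Real.Gamma (β + -α * n))‖
      = |x| ^ n * (|(Real.Gamma (β + -α * n))⁻¹| / n !) := by
        rw [div_eq_inv_mul, mul_inv, norm_mul, norm_mul, norm_pow, norm_inv, Real.norm_natCast]
        simp only [Real.norm_eq_abs]
        ring
    _ ≤ |x| ^ n * ((n ! : ℝ) ^ α / n !) := by gcongr
    _ = |x| ^ n * (n ! : ℝ) ^ (α - 1) := by rw [Real.rpow_sub_one (by positivity)]

theorem hasFPowerSeriesOnBall_wright (hα₀ : 0 < α) (hα₁ : α < 1) (hβ : 0 ≤ β) :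
    HasFPowerSeriesOnBall (wright (-α) β)
      (FormalMultilinearSeries.ofScalars ℝ fun n : ℕ => (n ! * Real.Gamma (β + -α * n))⁻¹) 0 ⊤ :=
  (hasFPowerSeriesOnBall_tsum fun x => by
    simpa only [div_eq_inv_mul] using summable_wright hα₀ hα₁ hβ x).congr
    fun _ _ => tsum_congr fun _ => inv_mul_eq_div _ _

theorem analyticOnNhd_wright (hα₀ : 0 < α) (hα₁ : α < 1) (hβ : 0 ≤ β) :
    AnalyticOnNhd ℝ (wright (-α) β) Set.univ := by
  simpa using (hasFPowerSeriesOnBall_wright hα₀ hα₁ hβ).analyticOnNhd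

theorem hasDerivAt_wright_zero (hα₀ : 0 < α) (hα₁ : α < 1) (hβ : 0 ≤ β) :
    HasDerivAt (wright (-α) β) (Real.Gamma (β - α))⁻¹ 0 := by
  simpa [← sub_eq_add_neg] using
    (hasFPowerSeriesOnBall_wright hα₀ hα₁ hβ).hasFPowerSeriesAt.hasDerivAt

theorem wright_apply_zero (ρ β : ℝ) : wright ρ β 0 = (Real.Gamma β)⁻¹ := by
  rw [wright, tsum_eq_single 0 fun n hn => by rw [zero_pow hn, zero_div]]
  simp

-- As `Real.Gamma 0 = 0`, the constant term vanishes; `(Γ γ)⁻¹ = γ * (Γ (γ + 1))⁻¹` rewrites the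
-- others.
theorem wright_zero_neg (hα₀ : 0 < α) (hα₁ : α < 1) (x : ℝ) :
    wright (-α) 0 (-x) = α * x * wright (-α) (1 - α) (-x) := by
  rw [wright, wright, (summable_wright hα₀ hα₁ le_rfl (-x)).tsum_eq_zero_add, ← tsum_mul_left,
    Nat.cast_zero, mul_zero, add_zero, Real.Gamma_zero, mul_zero, div_zero, zero_add]
  refine tsum_congr fun n => ?_
  have hΓ := inv_Gamma_eq_mul_inv_Gamma_add_one (0 + -α * (n + 1 : ℕ))
  rw [show 0 + -α * (n + 1 : ℕ) + 1 = 1 - α + -α * n by push_cast; ring] at hΓ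
  rw [div_mul_eq_div_div, div_eq_mul_inv _ (Real.Gamma _), hΓ, Nat.factorial_succ, pow_succ]
  push_cast
  field_simp
  ring

theorem nonneg_of_hasDerivAt_of_le {g : ℝ → ℝ} {g' a : ℝ} (hg : HasDerivAt g g' a)
    (h : ∀ t, 0 < t → g a ≤ g (a + t)) : 0 ≤ g' :=
  ge_of_tendsto hg.tendsto_slope_zero_right (by
    filter_upwards [self_mem_nhdsWithin] with t ht
    exact smul_nonneg (inv_nonneg.2 (le_of_lt ht)) (sub_nonneg.2 (h t ht)))

section

variable {F F' : ℝ → ℝ}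

theorem StrongLogConcave.mul_le (hF : StrongLogConcave fun x : ℝ≥0 => F x) {x d k : ℝ} (hx : 0 ≤ x)
    (hd : 0 ≤ d) (hk : 0 ≤ k) : F x * F (x + d + k) ≤ F (x + d) * F (x + k) :=
  hF ⟨x, hx⟩ ⟨d, hd⟩ ⟨k, hk⟩

theorem StrongLogConcave.mul_deriv_le (hF : StrongLogConcave fun x : ℝ≥0 => F x)
    {a b x y : ℝ} (hx : 0 ≤ x) (hxy : x ≤ y) (hFx : HasDerivAt F a x) (hFy : HasDerivAt F b y) :
    F x * b ≤ a * F y := by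
  have hderiv : HasDerivAt (fun t => F (x + t) * F y - F x * F (y + t)) (a * F y - F x * b) 0 := by
    refine (HasDerivAt.mul_const ?_ _).sub (HasDerivAt.const_mul _ ?_)
    · simpa using HasDerivAt.comp_const_add x 0 (by simpa using hFx)
    · simpa using HasDerivAt.comp_const_add y 0 (by simpa using hFy)
  refine sub_nonneg.1 (nonneg_of_hasDerivAt_of_le hderiv fun t ht => ?_)
  have h := hF.mul_le hx ht.le (sub_nonneg.2 hxy)
  rw [add_sub_cancel, add_right_comm, add_sub_cancel] at h
  simp only [zero_add, add_zero]
  linarith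

theorem StrongLogConcave.eq_zero_of_le (hF : StrongLogConcave fun x : ℝ≥0 => F x) (h0 : 0 < F 0)
    (hnonneg : ∀ x, 0 ≤ x → 0 ≤ F x) {z y : ℝ} (hz : 0 ≤ z) (hFz : F z = 0) (hzy : z ≤ y) :
    F y = 0 := by
  have h := hF.mul_le le_rfl hz (sub_nonneg.2 hzy)
  rw [zero_add, zero_add, add_sub_cancel, hFz, zero_mul] at h
  exact le_antisymm (nonpos_of_mul_nonpos_right h h0) (hnonneg y (hz.trans hzy))

theorem StrongLogConcave.pos_of_analyticOnNhd (hF : StrongLogConcave fun x : ℝ≥0 => F x)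
    (h0 : 0 < F 0) (hnonneg : ∀ x, 0 ≤ x → 0 ≤ F x) (hF_an : AnalyticOnNhd ℝ F Set.univ) {x : ℝ}
    (hx : 0 ≤ x) : 0 < F x := by
  refine (hnonneg x hx).lt_of_ne' fun hFx => h0.ne' ?_
  have hev : F =ᶠ[𝓝 (x + 1)] 0 := by
    filter_upwards [Ioi_mem_nhds (lt_add_one x)] with y hy
    exact hF.eq_zero_of_le h0 hnonneg hx hFx (le_of_lt hy)
  exact congrFun (hF_an.eq_of_eventuallyEq analyticOnNhd_const hev) 0

theorem LogConcaveOn'.of_concaveOn_log {f : ℝ → ℝ} {S : Set ℝ} (hf : ∀ x ∈ S, 0 < f x)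
    (hlog : ConcaveOn ℝ S fun x => Real.log (f x)) : LogConcaveOn' f S := by
  intro x hx y hy t ht
  have hmem : (1 - t) * x + t * y ∈ S :=
    hlog.1 hx hy (sub_nonneg.2 ht.2) ht.1 (sub_add_cancel 1 t)
  have h : (1 - t) * Real.log (f x) + t * Real.log (f y) ≤
    Real.log (f ((1 - t) * x + t * y)) := hlog.2 hx hy (sub_nonneg.2 ht.2) ht.1 (sub_add_cancel 1 t)
  rw [ge_iff_le, ← Real.log_le_log_iff _ (hf _ hmem), Real.log_mul, Real.log_rpow (hf x hx),
    Real.log_rpow (hf y hy)]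
  · exact h
  all_goals have := hf x hx; have := hf y hy; positivity

theorem StrongLogConcave.logConcaveOn_comp_exp (hF : StrongLogConcave fun x : ℝ≥0 => F x)
    (hpos : ∀ x, 0 ≤ x → 0 < F x) (hderiv : ∀ x, HasDerivAt F (F' x) x) (h0 : F' 0 ≤ 0) :
    LogConcaveOn' (fun t => F (Real.exp t)) Set.univ := by
  have hpos' : ∀ t, 0 < F (Real.exp t) := fun t => hpos _ (Real.exp_pos t).le
  have hlog : ∀ t, HasDerivAt (fun t => Real.log (F (Real.exp t)))
      (F' (Real.exp t) * Real.exp t / F (Real.exp t)) t :=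
    fun t => ((hderiv _).comp t (Real.hasDerivAt_exp t)).log (hpos' t).ne'
  have hF'_nonpos : ∀ x, 0 ≤ x → F' x ≤ 0 := fun x hx => by
    have h := hF.mul_deriv_le le_rfl hx (hderiv 0) (hderiv x)
    exact nonpos_of_mul_nonpos_right (h.trans (mul_nonpos_of_nonpos_of_nonneg h0 (hpos x hx).le))
      (hpos 0 le_rfl)
  refine LogConcaveOn'.of_concaveOn_log (fun t _ => hpos' t) (Antitone.concaveOn_univ_of_deriv
    (fun t => (hlog t).differentiableAt) fun s t hst => ?_)
  have hratio : F' (Real.exp t) / F (Real.exp t) ≤ F' (Real.exp s) / F (Real.exp s) := by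
    rw [div_le_div_iff₀ (hpos' t) (hpos' s), mul_comm]
    exact hF.mul_deriv_le (Real.exp_pos s).le (Real.exp_le_exp.2 hst) (hderiv _) (hderiv _)
  rw [(hlog t).deriv, (hlog s).deriv, mul_div_right_comm, mul_div_right_comm]
  calc F' (Real.exp t) / F (Real.exp t) * Real.exp t
      ≤ F' (Real.exp t) / F (Real.exp t) * Real.exp s :=
        mul_le_mul_of_nonpos_left (Real.exp_le_exp.2 hst)
          (div_nonpos_of_nonpos_of_nonneg (hF'_nonpos _ (Real.exp_pos t).le) (hpos' t).le)
    _ ≤ F' (Real.exp s) / F (Real.exp s) * Real.exp s :=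
        mul_le_mul_of_nonneg_right hratio (Real.exp_pos s).le

end

theorem LogConcaveOn'.mul_comp_exp_le {F : ℝ → ℝ}
    (h : LogConcaveOn' (fun t => F (Real.exp t)) Set.univ) (hnonneg : ∀ x, 0 < x → 0 ≤ F x)
    {x : ℝ} (hx : 0 < x) : F (2⁻¹ * x) * F (2 * x) ≤ F x ^ 2 := by
  have hmid := h (Real.log x - Real.log 2) trivial (Real.log x + Real.log 2) trivial 2⁻¹
    ⟨by norm_num, by norm_num⟩
  have hleft : Real.exp (Real.log x - Real.log 2) = 2⁻¹ * x := by
    rw [Real.exp_sub, Real.exp_log hx, Real.exp_log two_pos, div_eq_inv_mul]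
  have hright : Real.exp (Real.log x + Real.log 2) = 2 * x := by
    rw [Real.exp_add, Real.exp_log hx, Real.exp_log two_pos, mul_comm]
  have hcenter : Real.exp
      ((1 - 2⁻¹) * (Real.log x - Real.log 2) + 2⁻¹ * (Real.log x + Real.log 2)) = x := by
    rw [show (1 - 2⁻¹) * (Real.log x - Real.log 2) + 2⁻¹ * (Real.log x + Real.log 2) =
      Real.log x by ring, Real.exp_log hx]
  have h₁ : 0 ≤ F (2⁻¹ * x) := hnonneg _ (by positivity)
  have h₂ : 0 ≤ F (2 * x) := hnonneg _ (by positivity)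
  dsimp only at hmid
  rw [hleft, hright, hcenter, show (1 : ℝ) - 2⁻¹ = 2⁻¹ by norm_num, ← Real.mul_rpow h₁ h₂] at hmid
  calc F (2⁻¹ * x) * F (2 * x) = ((F (2⁻¹ * x) * F (2 * x)) ^ (2⁻¹ : ℝ)) ^ 2 := by
        rw [← Real.rpow_mul_natCast (mul_nonneg h₁ h₂)]; norm_num
    _ ≤ F x ^ 2 := by gcongr

theorem LogConcaveOn'.deriv_nonpos_of_comp_exp {F : ℝ → ℝ} {F' : ℝ}
    (h : LogConcaveOn' (fun t => F (Real.exp t)) Set.univ) (hnonneg : ∀ x, 0 < x → 0 ≤ F x)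
    (h0 : 0 < F 0) (hderiv : HasDerivAt F F' 0) : F' ≤ 0 := by
  have hscale (c : ℝ) : HasDerivAt (fun x => F (c * x)) (F' * c) 0 :=
    HasDerivAt.comp 0 (by simpa using hderiv) (hasDerivAt_const_mul c)
  have hdefect := nonneg_of_hasDerivAt_of_le ((hderiv.pow 2).sub ((hscale 2⁻¹).mul (hscale 2)))
    fun x hx => by
      have hx := h.mul_comp_exp_le hnonneg hx
      simp only [Pi.sub_apply, Pi.pow_apply, Pi.mul_apply, mul_zero, zero_add]
      linarith
  have hmul : F 0 * F' ≤ 0 := by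
    simp only [mul_zero] at hdefect
    linarith
  exact nonpos_of_mul_nonpos_right hmul h0

theorem LogConcaveOn'.mul {f g : ℝ → ℝ} {S : Set ℝ} (hf : LogConcaveOn' f S)
    (hg : LogConcaveOn' g S) (hf_nonneg : ∀ x, 0 ≤ f x) (hg_nonneg : ∀ x, 0 ≤ g x) :
    LogConcaveOn' (fun x => f x * g x) S := by
  intro x hx y hy t ht
  dsimp only
  rw [Real.mul_rpow (hf_nonneg x) (hg_nonneg x), Real.mul_rpow (hf_nonneg y) (hg_nonneg y),
    mul_mul_mul_comm]
  exact mul_le_mul (hf x hx y hy t ht) (hg x hx y hy t ht)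
    (mul_nonneg (Real.rpow_nonneg (hg_nonneg x) _) (Real.rpow_nonneg (hg_nonneg y) _))
    (hf_nonneg _)

theorem logConcaveOn_exp_affine (κ c : ℝ) (S : Set ℝ) :
    LogConcaveOn' (fun t => Real.exp (κ * t + c)) S := by
  intro x _ y _ t _
  dsimp only
  rw [← Real.exp_mul, ← Real.exp_mul, ← Real.exp_add]
  exact (congrArg Real.exp (by ring)).le

theorem logConcaveOn_exp_affine_mul_iff {g : ℝ → ℝ} (hg : ∀ t, 0 ≤ g t) (κ c : ℝ) (S : Set ℝ) :
    LogConcaveOn' (fun t => Real.exp (κ * t + c) * g t) S ↔ LogConcaveOn' g S := by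
  refine ⟨fun h => ?_, fun h =>
    (logConcaveOn_exp_affine κ c S).mul h (fun _ => (Real.exp_pos _).le) hg⟩
  have hmul := (logConcaveOn_exp_affine (-κ) (-c) S).mul h (fun _ => (Real.exp_pos _).le)
    fun t => mul_nonneg (Real.exp_pos _).le (hg t)
  convert hmul using 2 with t
  rw [← mul_assoc, ← Real.exp_add, show -κ * t + -c + (κ * t + c) = 0 by ring, Real.exp_zero,
    one_mul]

theorem hasDerivAt_wright_neg_zero (hα₀ : 0 < α) (hα₁ : α < 1) (hβ : 0 ≤ β) :
    HasDerivAt (fun x => wright (-α) β (-x)) (-(Real.Gamma (β - α))⁻¹) 0 := by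
  have h : HasDerivAt (wright (-α) β) (Real.Gamma (β - α))⁻¹ (-0) := by
    simpa using hasDerivAt_wright_zero hα₀ hα₁ hβ
  exact mul_neg_one (Real.Gamma (β - α))⁻¹ ▸ h.comp 0 (hasDerivAt_neg 0)

theorem inv_Gamma_sub_nonneg_iff (hα₁ : α < 1) (hβ : 0 < β) :
    0 ≤ (Real.Gamma (β - α))⁻¹ ↔ α ≤ β := by
  rw [inv_nonneg]
  refine ⟨fun h => ?_, fun h => Real.Gamma_nonneg_of_nonneg (sub_nonneg.2 h)⟩
  by_contra! hlt
  have hneg : β - α < 0 := sub_neg.2 hlt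
  have hΓ := Real.Gamma_pos_of_pos (by linarith : 0 < β - α + 1)
  rw [Real.Gamma_add_one hneg.ne] at hΓ
  exact hΓ.not_ge (mul_nonpos_of_nonpos_of_nonneg hneg.le h)

theorem logConcaveOn_wright_neg_exp_iff (hα₀ : 0 < α) (hα₁ : α < 1) (hβ : 0 < β) :
    LogConcaveOn' (fun t => wright (-α) β (-Real.exp t)) Set.univ ↔ α ≤ β := by
  set F : ℝ → ℝ := fun x => wright (-α) β (-x) with hF
  have hzero : 0 < F 0 := by
    simp only [hF, neg_zero, wright_apply_zero]
    exact inv_pos.2 (Real.Gamma_pos_of_pos hβ)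
  have hnonneg : ∀ x, 0 ≤ x → 0 ≤ F x := fun _ => wright_neg_nonneg hα₀ hα₁ hβ
  have hderiv_zero : HasDerivAt F (-(Real.Gamma (β - α))⁻¹) 0 :=
    hasDerivAt_wright_neg_zero hα₀ hα₁ hβ.le
  rw [← inv_Gamma_sub_nonneg_iff hα₁ hβ, ← neg_nonpos]
  refine ⟨fun h => LogConcaveOn'.deriv_nonpos_of_comp_exp (F := F) h (fun x hx => hnonneg x hx.le)
    hzero hderiv_zero, fun h => ?_⟩
  have hF_slc : StrongLogConcave fun x : ℝ≥0 => F x :=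
    strongLogConcave_wright_neg hα₀ hα₁ ((inv_Gamma_sub_nonneg_iff hα₁ hβ).1 (neg_nonpos.1 h))
  have hF_an : AnalyticOnNhd ℝ F Set.univ :=
    (analyticOnNhd_wright hα₀ hα₁ hβ.le).comp analyticOnNhd_id.neg fun _ _ => trivial
  exact hF_slc.logConcaveOn_comp_exp
    (fun _ => hF_slc.pos_of_analyticOnNhd hzero hnonneg hF_an)
    (fun x => (hF_an x trivial).differentiableAt.hasDerivAt) (hderiv_zero.deriv.trans_le h)

theorem logConcaveOn_wright_zero_neg_exp_iff (hα₀ : 0 < α) (hα₁ : α < 1) :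
    LogConcaveOn' (fun t => wright (-α) 0 (-Real.exp t)) Set.univ ↔ α ≤ 1 / 2 := by
  have hβ : 0 < 1 - α := sub_pos.2 hα₁
  have hfactor : (fun t => wright (-α) 0 (-Real.exp t)) =
      fun t => Real.exp (1 * t + Real.log α) * wright (-α) (1 - α) (-Real.exp t) := by
    ext t
    rw [wright_zero_neg hα₀ hα₁, one_mul, Real.exp_add, Real.exp_log hα₀, mul_comm α]
  rw [hfactor, logConcaveOn_exp_affine_mul_iff
      (fun t => wright_neg_nonneg hα₀ hα₁ hβ (Real.exp_pos t).le),
    logConcaveOn_wright_neg_exp_iff hα₀ hα₁ hβ]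
  constructor <;> intro h <;> linarith

end

/-- Proposition 1: for `α ∈ (0,1)` and `β ≥ 0`, `t ↦ φ(-α, β, -e^t)` is log-concave on
`ℝ` iff `β ≥ α`, or `β = 0` and `α ≤ 1/2` (multiplicative strong unimodality of
`M_{α,β}`). -/
theorem wright_msu_iff (α β : ℝ) (hα : α ∈ Set.Ioo (0 : ℝ) 1) (hβ : 0 ≤ β) :
    LogConcaveOn' (fun t => wright (-α) β (-Real.exp t)) Set.univ ↔
      (α ≤ β ∨ (β = 0 ∧ α ≤ 1/2)) := by
  obtain ⟨hα₀, hα₁⟩ := hα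
  rcases hβ.eq_or_lt with rfl | hβ
  · rw [logConcaveOn_wright_zero_neg_exp_iff hα₀ hα₁]
    simp only [hα₀.not_ge, true_and, false_or]
  · rw [logConcaveOn_wright_neg_exp_iff hα₀ hα₁ hβ]
    simp only [hβ.ne', false_and, or_false]
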